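/- (Deterministic core of the geometric lower bound on splitting times, Lemma A.5.) Let p ∈ [1,2], ε ∈ (0,1), and let j ≥ 0 be an integer with ε^p · 2^j ≤ 2^{10}. Let u be a stream of length m and let l, r, n be integers with 1 ≤ l ≤ r−n ≤ r ≤ m, W = [r−n,r], W' = [l,r], and F_p^{W'} ≤ 2·F_p^{W}. Let f be an interval estimator such that for all [a,b] ⊆ W', (1/2)·ℓ_p^{(a,b)} − (ε/2^{30})·ℓ_p^{W} ≤ f^{(a,b)} ≤ (3/2)·ℓ_p^{(a,b)} + (ε/2^{30})·ℓ_p^{W}. If l ≤ t_{k−1} ≤ r−n, t_{k−1} < t_{k+1} ≤ r, and f^{(t_{k−1}, t_{k+1})} ≥ 2^{(−j−14)/p} · f^{(t_{k−1}, r)}, then F_p^{(t_{k−1}, t_{k+1})} ≥ 2^{−j−21} · F_p^{W}. -/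

import Mathlib

/-! Let `L = ℓ_p^W`, `A = ℓ_p^{(t_{k-1}, t_{k+1})}`, `c = 2^{(-j-14)/p}` and `δ = ε / 2^30`.
Since `W ⊆ [t_{k-1}, r]`, monotonicity of the moments and the two-sided bound on `f` give
`c (1/2 - δ) L ≤ (3/2) A + δ L`. The hypothesis `ε^p 2^j ≤ 2^10` means
`ε ≤ 2^{(10-j)/p} = c 2^{24/p} ≤ c 2^24`, so `δ ≤ c / 64`: the additive error is small compared
with `c L`. Hence `A ≥ c L / 8 ≥ c 2^{-7/p} L`, where `p ≤ 2` is used for `2^{-7/p} ≤ 1/8`, and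
raising to the power `p` gives the claim. -/

/-- `freq u a b i` is the number of times universe item `i` occurs among the
stream elements `u a, …, u b` (the frequency vector entry `x^{(a,b)}_i`). -/
def freq (u : ℕ → ℕ) (a b i : ℕ) : ℕ :=
  ((Finset.Icc a b).filter (fun t => u t = i)).card

/-- `Fmom U u p a b = F_p^{(a,b)} = Σ_{i=1}^U (x^{(a,b)}_i)^p`. -/
noncomputable def Fmom (U : ℕ) (u : ℕ → ℕ) (p : ℝ) (a b : ℕ) : ℝ :=
  ∑ i ∈ Finset.Icc 1 U, (freq u a b i : ℝ) ^ p

/-- `lpnorm U u p a b = ℓ_p^{(a,b)} = (F_p^{(a,b)})^{1/p}`. -/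
noncomputable def lpnorm (U : ℕ) (u : ℕ → ℕ) (p : ℝ) (a b : ℕ) : ℝ :=
  (Fmom U u p a b) ^ (1 / p)

lemma Fmom_nonneg (U : ℕ) (u : ℕ → ℕ) (p : ℝ) (a b : ℕ) : 0 ≤ Fmom U u p a b :=
  Finset.sum_nonneg fun _ _ => Real.rpow_nonneg (Nat.cast_nonneg _) _

lemma Fmom_anti_left (U : ℕ) (u : ℕ → ℕ) {p : ℝ} (hp : 0 ≤ p) {a a' : ℕ} (h : a ≤ a') (b : ℕ) :
    Fmom U u p a' b ≤ Fmom U u p a b := by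
  refine Finset.sum_le_sum fun i _ => Real.rpow_le_rpow (Nat.cast_nonneg _) ?_ hp
  exact_mod_cast Finset.card_le_card
    (Finset.filter_subset_filter _ (Finset.Icc_subset_Icc_left h))

lemma lpnorm_nonneg (U : ℕ) (u : ℕ → ℕ) (p : ℝ) (a b : ℕ) : 0 ≤ lpnorm U u p a b :=
  Real.rpow_nonneg (Fmom_nonneg U u p a b) _

lemma lpnorm_rpow (U : ℕ) (u : ℕ → ℕ) {p : ℝ} (hp : p ≠ 0) (a b : ℕ) :
    lpnorm U u p a b ^ p = Fmom U u p a b := by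
  rw [lpnorm, one_div, Real.rpow_inv_rpow (Fmom_nonneg U u p a b) hp]

/-- The relative accuracy `ε` is at most a constant multiple of the threshold `2^{(-j-14)/p}`,
which makes the additive error of the estimator negligible. -/
lemma eps_le_threshold {p ε : ℝ} (hp : 1 ≤ p) (hε : 0 < ε) (j : ℕ)
    (hj : ε ^ p * 2 ^ j ≤ (2 : ℝ) ^ (10 : ℕ)) :
    ε ≤ (2 : ℝ) ^ ((-(j : ℝ) - 14) / p) * 2 ^ 24 := by
  have hp0 : 0 < p := by linarith
  have h1 : ε ^ p ≤ (2 : ℝ) ^ ((10 : ℝ) - j) := by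
    rw [Real.rpow_sub two_pos, Real.rpow_natCast, le_div_iff₀ (by positivity)]
    exact hj.trans (by norm_num)
  have h2 : (2 : ℝ) ^ ((10 : ℝ) - j) ≤ ((2 : ℝ) ^ ((-(j : ℝ) - 14) / p + 24)) ^ p := by
    rw [← Real.rpow_mul zero_le_two]
    refine Real.rpow_le_rpow_of_exponent_le one_le_two ?_
    rw [add_mul, div_mul_cancel₀ _ hp0.ne']
    linarith
  have h3 := (Real.rpow_le_rpow_iff hε.le (by positivity) hp0).1 (h1.trans h2)
  rw [Real.rpow_add two_pos] at h3
  exact h3.trans_eq (by norm_num)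

/-- Deterministic core of the geometric lower bound on splitting times
(Lemma A.5): if the Strong-Estimator-type estimate of `[t_{k-1}, t_{k+1}]` is
at least `2^{(-j-14)/p}` times the estimate of `[t_{k-1}, r]`, then
`F_p^{(t_{k-1}, t_{k+1})} ≥ 2^{-j-21}·F_p^W`. -/
theorem splitting_times_geometric_lower_bound
    (m U : ℕ) (u : ℕ → ℕ) (hu : ∀ t ∈ Finset.Icc 1 m, u t ∈ Finset.Icc 1 U)
    (p : ℝ) (hp1 : 1 ≤ p) (hp2 : p ≤ 2)
    (ε : ℝ) (hε : ε ∈ Set.Ioo (0 : ℝ) 1)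
    (j : ℕ) (hj : ε ^ p * 2 ^ j ≤ (2 : ℝ) ^ (10 : ℕ))
    (l r n : ℕ) (hl : 1 ≤ l) (hlr : l ≤ r - n) (hrn : r - n ≤ r) (hrm : r ≤ m)
    (hW' : Fmom U u p l r ≤ 2 * Fmom U u p (r - n) r)
    (f : ℕ → ℕ → ℝ)
    (hf : ∀ a b : ℕ, l ≤ a → a ≤ b → b ≤ r →
      (1 / 2 : ℝ) * lpnorm U u p a b - ε / 2 ^ 30 * lpnorm U u p (r - n) r ≤ f a b ∧
      f a b ≤ (3 / 2 : ℝ) * lpnorm U u p a b + ε / 2 ^ 30 * lpnorm U u p (r - n) r)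
    (tkm tk1 : ℕ)
    (htkm : l ≤ tkm) (htkm' : tkm ≤ r - n) (htk1 : tkm < tk1) (htk1' : tk1 ≤ r)
    (hbig : (2 : ℝ) ^ ((-(j : ℝ) - 14) / p) * f tkm r ≤ f tkm tk1) :
    (2 : ℝ) ^ (-(j : ℝ) - 21) * Fmom U u p (r - n) r ≤ Fmom U u p tkm tk1 := by
  obtain ⟨hε0, hε1⟩ := hε
  have hp0 : 0 < p := by linarith
  have hc := eps_le_threshold hp1 hε0 j hj
  have hc0 : 0 < (2 : ℝ) ^ ((-(j : ℝ) - 14) / p) := by positivity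
  have hfr := (hf tkm r htkm (htkm'.trans hrn) le_rfl).1
  have hft := (hf tkm tk1 htkm htk1.le htk1').2
  have hmono : lpnorm U u p (r - n) r ≤ lpnorm U u p tkm r :=
    Real.rpow_le_rpow (Fmom_nonneg ..) (Fmom_anti_left U u hp0.le htkm' r) (by positivity)
  have hL0 := lpnorm_nonneg U u p (r - n) r
  have hA0 := lpnorm_nonneg U u p tkm tk1
  rw [← lpnorm_rpow U u hp0.ne' (r - n) r, ← lpnorm_rpow U u hp0.ne' tkm tk1]
  have hpow : (2 : ℝ) ^ (-(j : ℝ) - 21) =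
      ((2 : ℝ) ^ ((-(j : ℝ) - 14) / p) * (2 : ℝ) ^ (-7 / p)) ^ p := by
    rw [← Real.rpow_add two_pos, ← Real.rpow_mul zero_le_two, ← add_div,
      div_mul_cancel₀ _ hp0.ne']
    ring_nf
  have h7 : (2 : ℝ) ^ (-7 / p) ≤ 1 / 8 := by
    have h : (2 : ℝ) ^ (-7 / p) ≤ (2 : ℝ) ^ (-3 : ℝ) := by
      refine Real.rpow_le_rpow_of_exponent_le one_le_two ?_
      rw [div_le_iff₀ hp0]
      linarith
    refine h.trans_eq ?_
    rw [Real.rpow_neg zero_le_two]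
    norm_num
  rw [hpow, ← Real.mul_rpow (by positivity) hL0]
  refine Real.rpow_le_rpow (by positivity) ?_ hp0.le
  generalize (2 : ℝ) ^ ((-(j : ℝ) - 14) / p) = c at *
  generalize lpnorm U u p (r - n) r = L at *
  generalize lpnorm U u p tkm tk1 = A at *
  have hcL : 0 ≤ c * L := by positivity
  have hfr' : (1 / 4 + 1 / 8) * L ≤ f tkm r := by
    have : ε / 2 ^ 30 * L ≤ 1 / 8 * L := by gcongr; linarith
    linarith
  have hδ : ε / 2 ^ 30 * L ≤ c / 64 * L :=
    mul_le_mul_of_nonneg_right (by linarith) hL0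
  have hcf := mul_le_mul_of_nonneg_left hfr' hc0.le
  calc c * (2 : ℝ) ^ (-7 / p) * L ≤ c * (1 / 8) * L := by gcongr
    _ ≤ A := by linarith
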